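/- arXiv:2002.01010 — 3 statements merged into one kernel-verified Lean document; each statement's English description precedes it below -/
import Mathlib

section
/- Let n ≥ 1 and let (a_N)_{N≥0} = (a_{1,N},…,a_{n,N}) be a sequence of vectors of positive reals with lim_{N→∞} a_N/N = (α_1,…,α_n) where α_i > 0 for every i. Then the sequence of Dirichlet laws Dir(a_{1,N},…,a_{n,N}), viewed as probability measures on the simplex Δ = {x ∈ ℝ^n : x_i ≥ 0, x_1+⋯+x_n = 1}, satisfies a large deviation principle at speed N with good rate function I(x) = (sup_{y ∈ Δ, y_i > 0} Σ_i α_i log y_i) − Σ_i α_i log x_i for x in the interior of Δ (all x_i > 0), and I(x) = +∞ otherwise: for every closed F ⊆ Δ, limsup_{N} (1/N) log Dir_N(F) ≤ −inf_F I, and for every relatively open O ⊆ Δ, liminf_{N} (1/N) log Dir_N(O) ≥ −inf_O I. In particular when Σ_i α_i = 1, I(x) = Σ_i α_i(log α_i − log x_i) on the interior of Δ. -/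
open MeasureTheory Filter
open scoped ENNReal

noncomputable section

/-- The Dirichlet density on the coordinates `(x₁,…,x_{n−1})`, `n = m+1`, with parameters
`a ∈ (0,∞)ⁿ`: it equals `(Γ(Σa)/∏Γ(aᵢ)) · ∏ xᵢ^{aᵢ−1} · (1−Σx)^{aₙ−1}` on
`{x : xᵢ > 0, Σx < 1}` and `0` elsewhere. -/
def dirichletDensity (m : ℕ) (a : Fin (m + 1) → ℝ) (x : Fin m → ℝ) : ℝ≥0∞ :=
  ENNReal.ofReal <|
    if (∀ i, 0 < x i) ∧ ∑ i, x i < 1 then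
      (Real.Gamma (∑ i, a i) / ∏ i, Real.Gamma (a i)) *
        (∏ i : Fin m, x i ^ (a i.castSucc - 1)) * (1 - ∑ i, x i) ^ (a (Fin.last m) - 1)
    else 0

/-- The Dirichlet law `Dir(a)` on the simplex `Δ ⊆ ℝⁿ`, `n = m+1`, obtained by pushing the
density on the first `n−1` coordinates forward along `x ↦ (x, 1 − Σx)`. -/
def dirichletLaw (m : ℕ) (a : Fin (m + 1) → ℝ) : Measure (Fin (m + 1) → ℝ) :=
  Measure.map (fun x : Fin m → ℝ => Fin.snoc x (1 - ∑ i, x i))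
    ((volume : Measure (Fin m → ℝ)).withDensity (dirichletDensity m a))

/-- The simplex `Δ = {x ∈ ℝⁿ : xᵢ ≥ 0, Σ xᵢ = 1}`. -/
def simplex (m : ℕ) : Set (Fin (m + 1) → ℝ) :=
  {x | (∀ i, 0 ≤ x i) ∧ ∑ i, x i = 1}

/-- The rate function `I(x) = (sup_{y ∈ Δ, yᵢ>0} Σ αᵢ log yᵢ) − Σ αᵢ log xᵢ` on the
interior of the simplex, and `+∞` elsewhere. -/
def dirichletRate (m : ℕ) (α : Fin (m + 1) → ℝ) (x : Fin (m + 1) → ℝ) : EReal :=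
  if (∀ i, 0 < x i) ∧ ∑ i, x i = 1 then
    ((sSup {r : ℝ | ∃ y : Fin (m + 1) → ℝ, (∀ i, 0 < y i) ∧ ∑ i, y i = 1 ∧
        r = ∑ i, α i * Real.log (y i)} - ∑ i, α i * Real.log (x i) : ℝ) : EReal)
  else ⊤



theorem ldp_gamma_lower {x : ℝ} (hx : 0 < x) :
    x ^ x * Real.exp (-x) ≤ Real.Gamma (x + 1) := by
  have hint := Real.GammaIntegral_convergent (s := x + 1) (by linarith)
  rw [Real.Gamma_eq_integral (by linarith)]
  have h1 : ∫ t in Set.Ioi x, Real.exp (-t) * t ^ (x + 1 - 1) ≤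
      ∫ t in Set.Ioi 0, Real.exp (-t) * t ^ (x + 1 - 1) := by
    apply setIntegral_mono_set hint
    · rw [EventuallyLE, ae_restrict_iff' measurableSet_Ioi]
      refine Eventually.of_forall fun t ht => ?_
      have : (0:ℝ) < t := ht
      simp only [Pi.zero_apply]
      positivity
    · exact (Set.Ioi_subset_Ioi hx.le).eventuallyLE
  refine le_trans ?_ h1
  have h2 : ∫ t in Set.Ioi x, x ^ x * Real.exp (-t) = x ^ x * Real.exp (-x) := by
    rw [integral_const_mul, integral_exp_neg_Ioi]
  rw [← h2]
  apply setIntegral_mono_on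
  · exact (integrableOn_exp_neg_Ioi x).const_mul _
  · exact hint.mono_set (Set.Ioi_subset_Ioi hx.le)
  · exact measurableSet_Ioi
  · intro t ht
    have ht' : x < t := ht
    rw [mul_comm, add_sub_cancel_right]
    gcongr

theorem ldp_gamma_upper {x : ℝ} (hx : 0 < x) :
    Real.Gamma (x + 1) ≤ (x + 1) ^ (x + 1) * Real.exp (-x) := by
  have hint := Real.GammaIntegral_convergent (s := x + 1) (by linarith)
  rw [Real.Gamma_eq_integral (by linarith)]
  have hc : 0 < x + 1 := by linarith
  have hI : IntegrableOn (fun t : ℝ => Real.exp (-(x+1)⁻¹ * t)) (Set.Ioi 0) :=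
    exp_neg_integrableOn_Ioi 0 (inv_pos.2 hc)
  have hv : ∫ t in Set.Ioi (0:ℝ), Real.exp (-(x+1)⁻¹ * t) = x + 1 := by
    have := integral_exp_mul_Ioi (a := -(x+1)⁻¹) (by simpa using hc) 0
    rw [this]; simp
  have h2 : ∫ t in Set.Ioi (0:ℝ), ((x+1)^x * Real.exp (-x)) * Real.exp (-(x+1)⁻¹ * t) =
      (x + 1) ^ (x + 1) * Real.exp (-x) := by
    rw [integral_const_mul, hv, Real.rpow_add_one hc.ne']
    ring
  rw [← h2]
  apply setIntegral_mono_on hint (hI.const_mul _) measurableSet_Ioi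
  intro t ht
  have ht : 0 < t := ht
  rw [add_sub_cancel_right, Real.rpow_def_of_pos ht, Real.rpow_def_of_pos hc, ← Real.exp_add,
    ← Real.exp_add, ← Real.exp_add]
  apply Real.exp_le_exp.2
  have h := Real.log_le_sub_one_of_pos (div_pos ht hc)
  rw [Real.log_div ht.ne' hc.ne'] at h
  have h3 := mul_le_mul_of_nonneg_left h hx.le
  have h4 : x * (t / (x+1)) = t - (x+1)⁻¹ * t := by field_simp; ring
  nlinarith

theorem ldp_stirling :
    Tendsto (fun x : ℝ => (Real.log (Real.Gamma x) - (x * Real.log x - x)) / x) atTop (nhds 0) := by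
  have hl : Tendsto (fun x : ℝ => -(Real.log x / x)) atTop (nhds 0) := by
    have := Real.isLittleO_log_id_atTop.tendsto_div_nhds_zero
    simpa using this.neg
  have hu : Tendsto (fun x : ℝ => (1 + x⁻¹) * x⁻¹) atTop (nhds 0) := by
    have h := tendsto_inv_atTop_zero (𝕜 := ℝ)
    simpa using (h.const_add 1).mul h
  refine tendsto_of_tendsto_of_tendsto_of_le_of_le' hl hu ?_ ?_
  · filter_upwards [eventually_gt_atTop 0] with x hx
    have hG := Real.Gamma_pos_of_pos hx
    have h := Real.log_le_log (by positivity) (ldp_gamma_lower hx)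
    rw [Real.Gamma_add_one hx.ne', Real.log_mul hx.ne' hG.ne', Real.log_mul (by positivity)
      (by positivity), Real.log_exp, Real.log_rpow hx] at h
    rw [← neg_div]
    gcongr
    linarith
  · filter_upwards [eventually_gt_atTop 0] with x hx
    have hG := Real.Gamma_pos_of_pos hx
    have hc : 0 < x + 1 := by linarith
    have h := Real.log_le_log (Real.Gamma_pos_of_pos hc) (ldp_gamma_upper hx)
    rw [Real.Gamma_add_one hx.ne', Real.log_mul hx.ne' hG.ne', Real.log_mul (by positivity)
      (by positivity), Real.log_exp, Real.log_rpow hc] at h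
    have h5 := Real.log_le_sub_one_of_pos (div_pos hc hx)
    rw [Real.log_div hc.ne' hx.ne'] at h5
    have h6 : (x+1)/x - 1 = x⁻¹ := by field_simp; ring
    rw [h6] at h5
    have h7 := mul_le_mul_of_nonneg_left h5 hc.le
    have h8 : (x+1) * x⁻¹ = 1 + x⁻¹ := by field_simp
    rw [div_eq_mul_inv]
    gcongr
    nlinarith

/-- asymptotics of `log Γ(b_N)/N` -/
theorem ldp_gamma_seq (b : ℕ → ℝ) (β : ℝ) (hβ : 0 < β)
    (hb : Tendsto (fun N : ℕ => b N / (N : ℝ)) atTop (nhds β)) :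
    Tendsto (fun N : ℕ => Real.log (Real.Gamma (b N)) / N - b N / N * Real.log N + b N / N)
      atTop (nhds (β * Real.log β)) := by
  have hN : Tendsto (fun N : ℕ => (N : ℝ)) atTop atTop := tendsto_natCast_atTop_atTop
  have hbt : Tendsto b atTop atTop := by
    have := hb.pos_mul_atTop hβ hN
    refine this.congr' ?_
    filter_upwards [eventually_gt_atTop 0] with N hN0
    field_simp
  have h1 := (ldp_stirling.comp hbt).mul hb
  have h2 : Tendsto (fun N : ℕ => b N / N * Real.log (b N / N)) atTop (nhds (β * Real.log β)) :=
    hb.mul (hb.log hβ.ne')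
  have h3 := h1.add h2
  simp only [zero_mul, zero_add] at h3
  refine h3.congr' ?_
  filter_upwards [eventually_gt_atTop 0, hbt.eventually_gt_atTop 0] with N hN0 hb0
  have : (0:ℝ) < N := by exact_mod_cast hN0
  simp only [Function.comp]
  rw [Real.log_div hb0.ne' this.ne']
  field_simp
  ring

/-- asymptotics of the normalising constant -/
theorem ldp_const {m : ℕ} (a : ℕ → Fin (m + 1) → ℝ) (hapos : ∀ N i, 0 < a N i)
    (α : Fin (m + 1) → ℝ) (hαpos : ∀ i, 0 < α i)
    (hlim : ∀ i, Tendsto (fun N : ℕ => a N i / (N : ℝ)) atTop (nhds (α i))) :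
    Tendsto (fun N : ℕ => Real.log (Real.Gamma (∑ i, a N i) / ∏ i, Real.Gamma (a N i)) / N) atTop
      (nhds (-∑ i, α i * Real.log (α i / ∑ j, α j))) := by
  have hA : 0 < ∑ j, α j := Finset.sum_pos (fun i _ => hαpos i) Finset.univ_nonempty
  have hs : Tendsto (fun N : ℕ => (∑ i, a N i) / (N : ℝ)) atTop (nhds (∑ i, α i)) := by
    simp only [Finset.sum_div]
    exact tendsto_finsetSum _ fun i _ => hlim i
  have h1 := ldp_gamma_seq _ _ hA hs
  have h2 := tendsto_finsetSum Finset.univ (fun i _ => ldp_gamma_seq _ _ (hαpos i) (hlim i))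
  have h3 := h1.sub h2
  have e : -∑ i, α i * Real.log (α i / ∑ j, α j) =
      (∑ i, α i) * Real.log (∑ i, α i) - ∑ i, α i * Real.log (α i) := by
    rw [Finset.sum_mul, ← Finset.sum_sub_distrib, ← Finset.sum_neg_distrib]
    refine Finset.sum_congr rfl fun i _ => ?_
    rw [Real.log_div (hαpos i).ne' hA.ne']
    ring
  rw [e]
  refine h3.congr fun N => ?_
  rw [Real.log_div (Real.Gamma_pos_of_pos (Finset.sum_pos (fun i _ => hapos N i)
    Finset.univ_nonempty)).ne' (Finset.prod_pos fun i _ => Real.Gamma_pos_of_pos (hapos N i)).ne',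
    Real.log_prod (fun i _ => (Real.Gamma_pos_of_pos (hapos N i)).ne')]
  simp only [Finset.sum_add_distrib, Finset.sum_sub_distrib, ← Finset.sum_mul, ← Finset.sum_div]
  ring

theorem ldp_gibbs {m : ℕ} (α : Fin (m + 1) → ℝ) (hαpos : ∀ i, 0 < α i) :
    sSup {r : ℝ | ∃ y : Fin (m + 1) → ℝ, (∀ i, 0 < y i) ∧ ∑ i, y i = 1 ∧
        r = ∑ i, α i * Real.log (y i)} = ∑ i, α i * Real.log (α i / ∑ j, α j) := by
  have hA : 0 < ∑ j, α j := Finset.sum_pos (fun i _ => hαpos i) Finset.univ_nonempty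
  apply IsGreatest.csSup_eq
  constructor
  · refine ⟨fun i => α i / ∑ j, α j, fun i => div_pos (hαpos i) hA, ?_, rfl⟩
    rw [← Finset.sum_div, div_self hA.ne']
  · rintro r ⟨y, hy, hy1, rfl⟩
    have : ∀ i ∈ Finset.univ, α i * Real.log (y i) ≤
        α i * Real.log (α i / ∑ j, α j) + ((∑ j, α j) * y i - α i) := by
      intro i _
      have hp := div_pos (hαpos i) hA
      have h := Real.log_le_sub_one_of_pos (div_pos (hy i) hp)
      rw [Real.log_div (hy i).ne' hp.ne'] at h
      have h2 := mul_le_mul_of_nonneg_left h (hαpos i).le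
      have h3 : α i * (y i / (α i / ∑ j, α j) - 1) = (∑ j, α j) * y i - α i := by
        have := hαpos i
        field_simp
      linarith
    refine (Finset.sum_le_sum this).trans (le_of_eq ?_)
    rw [Finset.sum_add_distrib, Finset.sum_sub_distrib, ← Finset.mul_sum, hy1]
    ring

theorem ldp_density {m : ℕ} (a : Fin (m + 1) → ℝ) (x : Fin m → ℝ)
    (hx : (∀ i, 0 < x i) ∧ ∑ i, x i < 1) :
    dirichletDensity m a x = ENNReal.ofReal ((Real.Gamma (∑ i, a i) / ∏ i, Real.Gamma (a i)) *
      Real.exp (∑ i, (a i - 1) *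
        Real.log ((Fin.snoc x (1 - ∑ i, x i) : Fin (m + 1) → ℝ) i))) := by
  have h1 : 0 < 1 - ∑ i, x i := by linarith [hx.2]
  rw [dirichletDensity, if_pos hx, Fin.sum_univ_castSucc (fun i => (a i - 1) * _), Real.exp_add,
    Real.exp_sum, mul_assoc]
  congr 2
  · refine congrArg₂ (· * ·) (Finset.prod_congr rfl fun i _ => ?_) ?_
    · rw [Fin.snoc_castSucc (α := fun _ => ℝ), Real.rpow_def_of_pos (hx.1 i), mul_comm]
    · rw [Fin.snoc_last (α := fun _ => ℝ), Real.rpow_def_of_pos h1, mul_comm]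

theorem ldp_snoc_continuous (m : ℕ) :
    Continuous (fun x : Fin m → ℝ => (Fin.snoc x (1 - ∑ i, x i) : Fin (m + 1) → ℝ)) := by
  refine Continuous.finSnoc (A := fun _ => ℝ) continuous_id ?_
  fun_prop

theorem ldp_snoc_sum {m : ℕ} (x : Fin m → ℝ) :
    ∑ i, (Fin.snoc x (1 - ∑ i, x i) : Fin (m + 1) → ℝ) i = 1 := by
  rw [Fin.sum_univ_castSucc]
  simp

theorem ldp_snoc_pos {m : ℕ} (x : Fin m → ℝ) :
    ((∀ i, 0 < x i) ∧ ∑ i, x i < 1) ↔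
      ∀ i, 0 < (Fin.snoc x (1 - ∑ i, x i) : Fin (m + 1) → ℝ) i := by
  rw [Fin.forall_fin_succ']
  simp

theorem ldp_law_apply {m : ℕ} (a : Fin (m + 1) → ℝ) {F : Set (Fin (m + 1) → ℝ)}
    (hF : MeasurableSet F) :
    dirichletLaw m a F = ∫⁻ x in (fun x : Fin m → ℝ =>
      (Fin.snoc x (1 - ∑ i, x i) : Fin (m + 1) → ℝ)) ⁻¹' F, dirichletDensity m a x := by
  have hm := (ldp_snoc_continuous m).measurable
  rw [dirichletLaw, Measure.map_apply hm hF, withDensity_apply _ (hm hF)]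

theorem ldp_upper_aux {m : ℕ} (a : Fin (m + 1) → ℝ) {F : Set (Fin (m + 1) → ℝ)}
    (hF : MeasurableSet F) (T : ℝ) (hC : 0 ≤ Real.Gamma (∑ i, a i) / ∏ i, Real.Gamma (a i))
    (h : ∀ y ∈ F, (∀ i, 0 < y i) → ∑ i, y i = 1 → ∑ i, (a i - 1) * Real.log (y i) ≤ T) :
    dirichletLaw m a F ≤ ENNReal.ofReal
      ((Real.Gamma (∑ i, a i) / ∏ i, Real.Gamma (a i)) * Real.exp T) := by
  rw [ldp_law_apply a hF]
  set K := ENNReal.ofReal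
      ((Real.Gamma (∑ i, a i) / ∏ i, Real.Gamma (a i)) * Real.exp T)
  have hm := (ldp_snoc_continuous m).measurable
  have hcube : MeasurableSet (Set.pi Set.univ fun _ : Fin m => Set.Icc (0:ℝ) 1) :=
    MeasurableSet.univ_pi fun _ => measurableSet_Icc
  calc _ ≤ ∫⁻ x in (fun x : Fin m → ℝ =>
      (Fin.snoc x (1 - ∑ i, x i) : Fin (m + 1) → ℝ)) ⁻¹' F,
        (Set.pi Set.univ fun _ : Fin m => Set.Icc (0:ℝ) 1).indicator (fun _ => K) x := by
        refine setLIntegral_mono' (hm hF) fun x hx => ?_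
        by_cases hp : (∀ i, 0 < x i) ∧ ∑ i, x i < 1
        · have hmem : x ∈ Set.pi Set.univ fun _ : Fin m => Set.Icc (0:ℝ) 1 := by
            intro i _
            refine ⟨(hp.1 i).le, ?_⟩
            exact (Finset.single_le_sum (fun j _ => (hp.1 j).le) (Finset.mem_univ i)).trans hp.2.le
          rw [Set.indicator_of_mem hmem, ldp_density a x hp]
          refine ENNReal.ofReal_le_ofReal (mul_le_mul_of_nonneg_left ?_ hC)
          exact Real.exp_le_exp.2 (h _ hx ((ldp_snoc_pos x).1 hp) (ldp_snoc_sum x))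
        · rw [dirichletDensity, if_neg hp]
          simp
    _ ≤ ∫⁻ x, (Set.pi Set.univ fun _ : Fin m => Set.Icc (0:ℝ) 1).indicator (fun _ => K) x :=
        setLIntegral_le_lintegral _ _
    _ = K := by
        rw [lintegral_indicator hcube]
        rw [setLIntegral_const, volume_pi_pi]
        simp

theorem ldp_upper_zero {m : ℕ} (a : Fin (m + 1) → ℝ) {F : Set (Fin (m + 1) → ℝ)}
    (hF : MeasurableSet F)
    (h : ∀ y ∈ F, (∀ i, 0 < y i) → ∑ i, y i = 1 → False) :
    dirichletLaw m a F = 0 := by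
  rw [ldp_law_apply a hF]
  have hm := (ldp_snoc_continuous m).measurable
  refine le_antisymm ?_ zero_le
  refine (setLIntegral_mono' (g := fun _ => 0) (hm hF) fun x hx => ?_).trans (by simp)
  by_cases hp : (∀ i, 0 < x i) ∧ ∑ i, x i < 1
  · exact (h _ hx ((ldp_snoc_pos x).1 hp) (ldp_snoc_sum x)).elim
  · rw [dirichletDensity, if_neg hp]
    simp

theorem ldp_lower_aux {m : ℕ} {U : Set (Fin (m + 1) → ℝ)} (hU : IsOpen U)
    (x : Fin (m + 1) → ℝ) (hxU : x ∈ U) (hx : ∀ i, 0 < x i) (hx1 : ∑ i, x i = 1)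
    (ε : ℝ) (hε : 0 < ε) :
    ∃ v : ℝ, 0 < v ∧ ∀ a : Fin (m + 1) → ℝ, (∀ i, 1 ≤ a i) →
      ENNReal.ofReal ((Real.Gamma (∑ i, a i) / ∏ i, Real.Gamma (a i)) *
        Real.exp (∑ i, (a i - 1) * (Real.log (x i) - ε)) * v) ≤
      dirichletLaw m a (U ∩ simplex m) := by
  set f := fun x : Fin m → ℝ => (Fin.snoc x (1 - ∑ i, x i) : Fin (m + 1) → ℝ) with hf
  have hc := ldp_snoc_continuous m
  have hm := hc.measurable
  let W : Set (Fin (m + 1) → ℝ) :=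
    U ∩ Set.pi Set.univ (fun i => Set.Ioi (x i * Real.exp (-ε)))
  have hW : IsOpen W := hU.inter (isOpen_set_pi Set.finite_univ fun i _ => isOpen_Ioi)
  have hWpos : ∀ y ∈ W, ∀ i, 0 < y i := fun y hy i =>
    lt_trans (mul_pos (hx i) (Real.exp_pos _)) (hy.2 i (Set.mem_univ i))
  let V := f ⁻¹' W
  have hV : IsOpen V := hW.preimage hc
  have hfx : f (fun i => x i.castSucc) = x := by
    have : 1 - ∑ i : Fin m, x i.castSucc = x (Fin.last m) := by
      rw [← hx1, Fin.sum_univ_castSucc]; ring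
    simp only [hf, this]
    exact Fin.snoc_init_self x
  have hVne : V.Nonempty := by
    refine ⟨fun i => x i.castSucc, ?_⟩
    change f _ ∈ W
    rw [hfx]
    refine ⟨hxU, fun i _ => ?_⟩
    have : Real.exp (-ε) < 1 := by simpa using hε
    exact (mul_lt_iff_lt_one_right (hx i)).2 this
  have hVpos : 0 < (volume : Measure (Fin m → ℝ)) V := hV.measure_pos _ hVne
  have hVsub : V ⊆ Set.pi Set.univ fun _ : Fin m => Set.Icc (0:ℝ) 1 := by
    intro y hy i _
    have hp := (ldp_snoc_pos y).2 (hWpos _ hy)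
    refine ⟨(hp.1 i).le, ?_⟩
    exact (Finset.single_le_sum (fun j _ => (hp.1 j).le) (Finset.mem_univ i)).trans hp.2.le
  have hVfin : (volume : Measure (Fin m → ℝ)) V ≠ ⊤ := by
    refine ne_top_of_le_ne_top ?_ (measure_mono hVsub)
    rw [volume_pi_pi]
    simp
  refine ⟨((volume : Measure (Fin m → ℝ)) V).toReal, ENNReal.toReal_pos hVpos.ne' hVfin, ?_⟩
  intro a ha
  have hC : 0 ≤ Real.Gamma (∑ i, a i) / ∏ i, Real.Gamma (a i) := by
    refine div_nonneg (Real.Gamma_nonneg_of_nonneg (Finset.sum_nonneg fun i _ => ?_))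
      (Finset.prod_nonneg fun i _ => Real.Gamma_nonneg_of_nonneg ?_) <;> linarith [ha i]
  have hS : IsClosed (simplex m) := by
    have : simplex m = (⋂ i, {x | 0 ≤ x i}) ∩ {x | ∑ i, x i = 1} := by
      ext y; simp [simplex]
    rw [this]
    refine IsClosed.inter (isClosed_iInter fun i => isClosed_le (by fun_prop) (by fun_prop))
      (isClosed_eq (by fun_prop) (by fun_prop))
  rw [ldp_law_apply a (hU.measurableSet.inter hS.measurableSet)]
  rw [ENNReal.ofReal_mul (by positivity), ENNReal.ofReal_toReal hVfin]
  have hsub : V ⊆ f ⁻¹' (U ∩ simplex m) := by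
    intro y hy
    exact ⟨hy.1, fun i => (hWpos _ hy i).le, ldp_snoc_sum y⟩
  refine le_trans ?_ (lintegral_mono_set hsub)
  rw [← setLIntegral_const]
  refine setLIntegral_mono' hV.measurableSet fun y hy => ?_
  rw [ldp_density a y ((ldp_snoc_pos y).2 (hWpos _ hy))]
  refine ENNReal.ofReal_le_ofReal (mul_le_mul_of_nonneg_left ?_ hC)
  refine Real.exp_le_exp.2 (Finset.sum_le_sum fun i _ => ?_)
  refine mul_le_mul_of_nonneg_left ?_ (by linarith [ha i])
  have h := Real.log_le_log (mul_pos (hx i) (Real.exp_pos (-ε))) (hy.2 i (Set.mem_univ i)).le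
  rw [Real.log_mul (hx i).ne' (Real.exp_pos _).ne', Real.log_exp] at h
  exact h

theorem ldp_scale_le {N : ℕ} (hN : 0 < N) {μ : ℝ≥0∞} {s : ℝ} (hs : 0 < s)
    (h : μ ≤ ENNReal.ofReal s) :
    (((N : ℝ)⁻¹ : ℝ) : EReal) * ENNReal.log μ ≤ ((Real.log s / N : ℝ) : EReal) := by
  have h1 := ENNReal.log_monotone h
  rw [ENNReal.log_ofReal_of_pos hs] at h1
  rw [div_eq_inv_mul, EReal.coe_mul]
  exact mul_le_mul_of_nonneg_left h1 (by exact_mod_cast (by positivity : (0:ℝ) ≤ (N:ℝ)⁻¹))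

theorem ldp_le_scale {N : ℕ} (hN : 0 < N) {μ : ℝ≥0∞} {s : ℝ} (hs : 0 < s)
    (h : ENNReal.ofReal s ≤ μ) :
    ((Real.log s / N : ℝ) : EReal) ≤ (((N : ℝ)⁻¹ : ℝ) : EReal) * ENNReal.log μ := by
  have h1 := ENNReal.log_monotone h
  rw [ENNReal.log_ofReal_of_pos hs] at h1
  rw [div_eq_inv_mul, EReal.coe_mul]
  exact mul_le_mul_of_nonneg_left h1 (by exact_mod_cast (by positivity : (0:ℝ) ≤ (N:ℝ)⁻¹))

theorem ldp_le_one {m : ℕ} {x : Fin (m + 1) → ℝ} (hx : ∀ i, 0 < x i) (hx1 : ∑ i, x i = 1)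
    (i : Fin (m + 1)) : x i ≤ 1 :=
  hx1 ▸ Finset.single_le_sum (fun j _ => (hx j).le) (Finset.mem_univ i)

theorem ldp_compact {m : ℕ} (α : Fin (m + 1) → ℝ) (hαpos : ∀ i, 0 < α i) (c : ℝ) :
    IsCompact {x : Fin (m + 1) → ℝ | dirichletRate m α x ≤ (c : EReal)} := by
  set S := sSup {r : ℝ | ∃ y : Fin (m + 1) → ℝ, (∀ i, 0 < y i) ∧ ∑ i, y i = 1 ∧
        r = ∑ i, α i * Real.log (y i)} with hS
  let K : Set (Fin (m + 1) → ℝ) :=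
    Set.pi Set.univ fun i => Set.Icc (Real.exp ((S - c) / α i)) 1
  have hK : IsCompact K := isCompact_univ_pi fun i => isCompact_Icc
  have hKpos : ∀ x ∈ K, ∀ i, 0 < x i := fun x hx i =>
    lt_of_lt_of_le (Real.exp_pos _) (hx i (Set.mem_univ i)).1
  have hcont : ContinuousOn (fun x : Fin (m + 1) → ℝ => ∑ i, α i * Real.log (x i)) K := by
    refine continuousOn_finsetSum _ fun i _ => ContinuousOn.mul continuousOn_const ?_
    exact ContinuousOn.log (by fun_prop) fun x hx => (hKpos x hx i).ne'
  have h1 : IsClosed (K ∩ (fun x : Fin (m + 1) → ℝ => ∑ i, α i * Real.log (x i)) ⁻¹'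
      Set.Ici (S - c)) := hcont.preimage_isClosed_of_isClosed hK.isClosed isClosed_Ici
  have h2 : IsClosed {x : Fin (m + 1) → ℝ | ∑ i, x i = 1} :=
    isClosed_eq (by fun_prop) (by fun_prop)
  have e : {x : Fin (m + 1) → ℝ | dirichletRate m α x ≤ (c : EReal)} =
      K ∩ ((K ∩ (fun x : Fin (m + 1) → ℝ => ∑ i, α i * Real.log (x i)) ⁻¹'
      Set.Ici (S - c)) ∩ {x : Fin (m + 1) → ℝ | ∑ i, x i = 1}) := by
    ext x
    simp only [Set.mem_ofPred_eq, Set.mem_inter_iff, Set.mem_preimage, Set.mem_Ici]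
    constructor
    · intro h
      rw [dirichletRate] at h
      split_ifs at h with hp
      · rw [EReal.coe_le_coe_iff, ← hS] at h
        have hxK : x ∈ K := by
          intro i _
          refine ⟨?_, ldp_le_one hp.1 hp.2 i⟩
          rw [← Real.le_log_iff_exp_le (hp.1 i), div_le_iff₀ (hαpos i)]
          have hle : ∑ j, α j * Real.log (x j) ≤ α i * Real.log (x i) := by
            rw [← Finset.sum_erase_add _ _ (Finset.mem_univ i)]
            have : ∑ j ∈ Finset.univ.erase i, α j * Real.log (x j) ≤ 0 :=
              Finset.sum_nonpos fun j _ => mul_nonpos_of_nonneg_of_nonpos (hαpos j).le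
                (Real.log_nonpos (hp.1 j).le (ldp_le_one hp.1 hp.2 j))
            linarith
          linarith
        exact ⟨hxK, ⟨hxK, by linarith⟩, hp.2⟩
      · exact absurd h (by simp)
    · rintro ⟨hxK, ⟨_, h⟩, hs⟩
      rw [dirichletRate, if_pos ⟨hKpos x hxK, hs⟩, EReal.coe_le_coe_iff, ← hS]
      linarith
  rw [e]
  exact hK.inter_right (h1.inter h2)

theorem ldp_upper {m : ℕ} (a : ℕ → Fin (m + 1) → ℝ) (hapos : ∀ N i, 0 < a N i)
    (α : Fin (m + 1) → ℝ) (hαpos : ∀ i, 0 < α i)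
    (hlim : ∀ i, Tendsto (fun N : ℕ => a N i / (N : ℝ)) atTop (nhds (α i)))
    (F : Set (Fin (m + 1) → ℝ)) (hF : MeasurableSet F) :
    limsup (fun N : ℕ => (((N : ℝ)⁻¹ : ℝ) : EReal) *
          ENNReal.log (dirichletLaw m (a N) F)) atTop
        ≤ -(⨅ x ∈ F, dirichletRate m α x) := by
  by_cases hne : ∃ y ∈ F, (∀ i, 0 < y i) ∧ ∑ i, y i = 1
  swap
  · push Not at hne
    have h0 : ∀ N, dirichletLaw m (a N) F = 0 := fun N =>
      ldp_upper_zero (a N) hF fun y hy h1 h2 => hne y hy h1 h2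
    have : limsup (fun N : ℕ => (((N : ℝ)⁻¹ : ℝ) : EReal) *
          ENNReal.log (dirichletLaw m (a N) F)) atTop ≤ limsup (fun _ : ℕ => (⊥ : EReal)) atTop := by
      refine limsup_le_limsup ?_
      filter_upwards [eventually_gt_atTop 0] with N hN
      rw [h0, ENNReal.log_zero, EReal.coe_mul_bot_of_pos (by positivity)]
    refine this.trans ?_
    simp
  · obtain ⟨y0, hy0, hp0⟩ := hne
    set S := ∑ i, α i * Real.log (α i / ∑ j, α j) with hS
    have hrate : ∀ y : Fin (m + 1) → ℝ, (∀ i, 0 < y i) → ∑ i, y i = 1 →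
        dirichletRate m α y = ((S - ∑ i, α i * Real.log (y i) : ℝ) : EReal) := by
      intro y h1 h2
      rw [dirichletRate, if_pos ⟨h1, h2⟩, ldp_gibbs α hαpos]
    have hg : ∀ y : Fin (m + 1) → ℝ, (∀ i, 0 < y i) → ∑ i, y i = 1 →
        ∑ i, α i * Real.log (y i) ≤ 0 := fun y h1 h2 =>
      Finset.sum_nonpos fun j _ => mul_nonpos_of_nonneg_of_nonpos (hαpos j).le
        (Real.log_nonpos (h1 j).le (ldp_le_one h1 h2 j))
    have hJ1 : (⨅ x ∈ F, dirichletRate m α x) ≤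
        ((S - ∑ i, α i * Real.log (y0 i) : ℝ) : EReal) := by
      rw [← hrate y0 hp0.1 hp0.2]
      exact iInf₂_le y0 hy0
    have hJ2 : ((S : ℝ) : EReal) ≤ ⨅ x ∈ F, dirichletRate m α x := by
      refine le_iInf₂ fun x _ => ?_
      by_cases hp : (∀ i, 0 < x i) ∧ ∑ i, x i = 1
      · rw [hrate x hp.1 hp.2, EReal.coe_le_coe_iff]
        linarith [hg x hp.1 hp.2]
      · rw [dirichletRate, if_neg hp]
        exact le_top
    obtain ⟨j, hj⟩ : ∃ j : ℝ, (⨅ x ∈ F, dirichletRate m α x) = (j : EReal) := by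
      refine ⟨_, (EReal.coe_toReal ?_ ?_).symm⟩
      · exact ne_top_of_le_ne_top (EReal.coe_ne_top _) hJ1
      · exact ne_bot_of_le_ne_bot (EReal.coe_ne_bot _) hJ2
    have hM : ∀ y ∈ F, (∀ i, 0 < y i) → ∑ i, y i = 1 → ∑ i, α i * Real.log (y i) ≤ S - j := by
      intro y hy h1 h2
      have : (⨅ x ∈ F, dirichletRate m α x) ≤ dirichletRate m α y := iInf₂_le y hy
      rw [hj, hrate y h1 h2, EReal.coe_le_coe_iff] at this
      linarith
    rw [hj]
    let ρ : ℕ → ℝ := fun N => 1 - ∑ i, |(a N i - 1) / N / α i - 1|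
    have hρ : Tendsto ρ atTop (nhds 1) := by
      have : Tendsto (fun N => ∑ i, |(a N i - 1) / N / α i - 1|) atTop (nhds (∑ i : Fin (m+1), 0)) := by
        refine tendsto_finsetSum _ fun i _ => ?_
        have h1 : Tendsto (fun N : ℕ => (a N i - 1) / N) atTop (nhds (α i)) := by
          have := (hlim i).sub (tendsto_inv_atTop_nhds_zero_nat (𝕜 := ℝ))
          simp only [sub_zero] at this
          refine this.congr fun N => ?_
          ring
        have h2 := ((h1.div_const (α i)).sub_const 1).abs
        rwa [div_self (hαpos i).ne', sub_self, abs_zero] at h2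
      simpa using this.const_sub 1
    have hC : ∀ N, 0 < Real.Gamma (∑ i, a N i) / ∏ i, Real.Gamma (a N i) := fun N =>
      div_pos (Real.Gamma_pos_of_pos (Finset.sum_pos (fun i _ => hapos N i)
        Finset.univ_nonempty)) (Finset.prod_pos fun i _ => Real.Gamma_pos_of_pos (hapos N i))
    have hu := (ldp_const a hapos α hαpos hlim).add (hρ.mul_const (S - j))
    have hu' := (continuous_coe_real_ereal.tendsto _).comp hu
    have e : ((-∑ i, α i * Real.log (α i / ∑ j, α j) + 1 * (S - j) : ℝ) : EReal) = -(j : EReal) := by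
      rw [← EReal.coe_neg, ← hS]
      congr 1; ring
    rw [e] at hu'
    rw [← hu'.limsup_eq]
    refine limsup_le_limsup ?_
    filter_upwards [eventually_gt_atTop 0, hρ.eventually (lt_mem_nhds zero_lt_one)] with N hN hρN
    have hN' : (0:ℝ) < N := by exact_mod_cast hN
    have key := ldp_upper_aux (a N) hF (N * (ρ N * (S - j))) (hC N).le ?_
    · refine (ldp_scale_le hN (mul_pos (hC N) (Real.exp_pos _)) key).trans (le_of_eq ?_)
      simp only [Function.comp]
      rw [Real.log_mul (hC N).ne' (Real.exp_pos _).ne', Real.log_exp]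
      congr 1
      field_simp
    · intro y hy h1 h2
      have hs : ∑ i, (a N i - 1) * Real.log (y i) ≤ N * (ρ N * ∑ i, α i * Real.log (y i)) := by
        rw [Finset.mul_sum, Finset.mul_sum]
        refine Finset.sum_le_sum fun i _ => ?_
        have hl := Real.log_nonpos (h1 i).le (ldp_le_one h1 h2 i)
        have hr : ρ N ≤ (a N i - 1) / N / α i := by
          have h3 : |(a N i - 1) / N / α i - 1| ≤ ∑ i, |(a N i - 1) / N / α i - 1| :=
            Finset.single_le_sum (f := fun i => |(a N i - 1) / N / α i - 1|)
              (fun _ _ => abs_nonneg _) (Finset.mem_univ i)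
          have h4 := neg_abs_le ((a N i - 1) / N / α i - 1)
          simp only [ρ]
          linarith
        rw [div_div, le_div_iff₀ (mul_pos hN' (hαpos i))] at hr
        calc _ ≤ (ρ N * (N * α i)) * Real.log (y i) := mul_le_mul_of_nonpos_right hr hl
          _ = _ := by ring
      refine hs.trans ?_
      have := hM y hy h1 h2
      gcongr

theorem ldp_lower {m : ℕ} (a : ℕ → Fin (m + 1) → ℝ) (hapos : ∀ N i, 0 < a N i)
    (α : Fin (m + 1) → ℝ) (hαpos : ∀ i, 0 < α i)
    (hlim : ∀ i, Tendsto (fun N : ℕ => a N i / (N : ℝ)) atTop (nhds (α i)))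
    (U : Set (Fin (m + 1) → ℝ)) (hU : IsOpen U) :
    -(⨅ x ∈ U ∩ simplex m, dirichletRate m α x)
        ≤ liminf (fun N : ℕ => (((N : ℝ)⁻¹ : ℝ) : EReal) *
            ENNReal.log (dirichletLaw m (a N) (U ∩ simplex m))) atTop := by
  have hA : 0 < ∑ j, α j := Finset.sum_pos (fun i _ => hαpos i) Finset.univ_nonempty
  rw [EReal.neg_le]
  refine le_iInf₂ fun x hx => ?_
  rw [EReal.neg_le]
  by_cases hp : (∀ i, 0 < x i) ∧ ∑ i, x i = 1
  swap
  · rw [dirichletRate, if_neg hp]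
    simp
  rw [dirichletRate, if_pos hp, ldp_gibbs α hαpos, ← EReal.coe_neg]
  set S := ∑ i, α i * Real.log (α i / ∑ j, α j) with hS
  refine EReal.ge_of_forall_gt_iff_ge.1 fun z hz => ?_
  rw [EReal.coe_lt_coe_iff] at hz
  set r := -(S - ∑ i, α i * Real.log (x i)) with hr
  set ε := (r - z) / ∑ j, α j with hεd
  have hε : 0 < ε := div_pos (by linarith) hA
  obtain ⟨v, hv, hlow⟩ := ldp_lower_aux hU x hx.1 hp.1 hp.2 ε hε
  have hC : ∀ N, 0 < Real.Gamma (∑ i, a N i) / ∏ i, Real.Gamma (a N i) := fun N =>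
    div_pos (Real.Gamma_pos_of_pos (Finset.sum_pos (fun i _ => hapos N i)
      Finset.univ_nonempty)) (Finset.prod_pos fun i _ => Real.Gamma_pos_of_pos (hapos N i))
  have ha1 : ∀ᶠ N in atTop, ∀ i, 1 ≤ a N i := by
    rw [eventually_all]
    intro i
    have hN : Tendsto (fun N : ℕ => (N : ℝ)) atTop atTop := tendsto_natCast_atTop_atTop
    have : Tendsto (fun N => a N i) atTop atTop := by
      refine ((hlim i).pos_mul_atTop (hαpos i) hN).congr' ?_
      filter_upwards [eventually_gt_atTop 0] with N hN0
      field_simp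
    exact this.eventually_ge_atTop 1
  have h1 : Tendsto (fun N : ℕ => ∑ i, (a N i - 1) / N * (Real.log (x i) - ε)) atTop
      (nhds (∑ i, α i * (Real.log (x i) - ε))) := by
    refine tendsto_finsetSum _ fun i _ => Tendsto.mul_const _ ?_
    have := (hlim i).sub (tendsto_inv_atTop_nhds_zero_nat (𝕜 := ℝ))
    simp only [sub_zero] at this
    refine this.congr fun N => ?_
    ring
  have h2 : Tendsto (fun N : ℕ => Real.log v / N) atTop (nhds 0) :=
    tendsto_const_div_atTop_nhds_zero_nat _
  have hu := ((ldp_const a hapos α hαpos hlim).add h1).add h2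
  have hu' := (continuous_coe_real_ereal.tendsto _).comp hu
  have e : -∑ i, α i * Real.log (α i / ∑ j, α j) + ∑ i, α i * (Real.log (x i) - ε) + 0 = z := by
    have : (∑ j, α j) * ε = r - z := by rw [hεd]; field_simp
    simp only [mul_sub, Finset.sum_sub_distrib, ← Finset.sum_mul]
    rw [this, hr, ← hS]
    ring
  rw [e] at hu'
  rw [← hu'.liminf_eq]
  refine liminf_le_liminf ?_
  filter_upwards [eventually_gt_atTop 0, ha1] with N hN haN
  refine le_trans (le_of_eq ?_) (ldp_le_scale hN
    (mul_pos (mul_pos (hC N) (Real.exp_pos _)) hv) (hlow (a N) haN))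
  simp only [Function.comp]
  rw [Real.log_mul (mul_pos (hC N) (Real.exp_pos _)).ne' hv.ne',
    Real.log_mul (hC N).ne' (Real.exp_pos _).ne', Real.log_exp, add_div, add_div, Finset.sum_div]
  congr 3
  refine Finset.sum_congr rfl fun i _ => ?_
  ring

/-- Large deviation principle at speed `N` for Dirichlet laws
`Dir(a_N)` with `a_N / N → α`, `αᵢ > 0`, with good rate function `dirichletRate`:
upper bound over closed subsets of the simplex, lower bound over relatively open
subsets, compact sublevel sets, and the identification `I(x) = Σ αᵢ(log αᵢ − log xᵢ)`
on the interior when `Σ αᵢ = 1`. -/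
theorem dirichlet_ldp
    (m : ℕ) (a : ℕ → Fin (m + 1) → ℝ) (hapos : ∀ N i, 0 < a N i)
    (α : Fin (m + 1) → ℝ) (hαpos : ∀ i, 0 < α i)
    (hlim : ∀ i, Tendsto (fun N : ℕ => a N i / (N : ℝ)) atTop (nhds (α i))) :
    (∀ c : ℝ, IsCompact {x : Fin (m + 1) → ℝ | dirichletRate m α x ≤ (c : EReal)}) ∧
    (∀ F : Set (Fin (m + 1) → ℝ), IsClosed F → F ⊆ simplex m →
      limsup (fun N : ℕ => (((N : ℝ)⁻¹ : ℝ) : EReal) *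
          ENNReal.log (dirichletLaw m (a N) F)) atTop
        ≤ -(⨅ x ∈ F, dirichletRate m α x)) ∧
    (∀ O : Set (Fin (m + 1) → ℝ), (∃ U, IsOpen U ∧ O = U ∩ simplex m) →
      -(⨅ x ∈ O, dirichletRate m α x)
        ≤ liminf (fun N : ℕ => (((N : ℝ)⁻¹ : ℝ) : EReal) *
            ENNReal.log (dirichletLaw m (a N) O)) atTop) ∧
    ((∑ i, α i = 1) → ∀ x : Fin (m + 1) → ℝ, (∀ i, 0 < x i) → ∑ i, x i = 1 →
      dirichletRate m α x =
        ((∑ i, α i * (Real.log (α i) - Real.log (x i)) : ℝ) : EReal)) := by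
  refine ⟨ldp_compact α hαpos, fun F hF _ => ldp_upper a hapos α hαpos hlim F hF.measurableSet,
    ?_, ?_⟩
  · rintro O ⟨U, hU, rfl⟩
    exact ldp_lower a hapos α hαpos hlim U hU
  · intro h1 x hx hx1
    rw [dirichletRate, if_pos ⟨hx, hx1⟩, ldp_gibbs α hαpos, h1]
    congr 1
    simp only [div_one, mul_sub, Finset.sum_sub_distrib]

end
end

section
/- Let σ : [0,1]² → [0,∞) be a bounded continuous symmetric function, and for θ > 0 set F(σ,θ) = sup over probability measures μ on [0,1] of θ²·P(σ,μ) − (1/2)·D(Leb‖μ), where P(σ,μ) = ∫∫σ²(x,y)dμ(x)dμ(y) and D(Leb‖μ) is the Kullback–Leibler divergence of Lebesgue measure on [0,1] with respect to μ. Then: (i) for every θ > 0 the supremum is attained by some probability measure on [0,1]; (ii) |F(σ,θ) − F(σ,θ')| ≤ (sup_{x,y}σ²(x,y))·|θ² − θ'²| for all θ, θ' > 0, so F(σ,·) is continuous in θ. -/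
open MeasureTheory

noncomputable section

/-- Lebesgue measure restricted to `[0,1]`. -/
def leb01 : Measure ℝ := volume.restrict (Set.Icc (0:ℝ) 1)

/-- `P(σ,μ) = ∫∫ σ²(x,y) dμ(x) dμ(y)`. -/
def Pfun (σ : ℝ → ℝ → ℝ) (μ : Measure ℝ) : ℝ := ∫ x, ∫ y, σ x y ^ 2 ∂μ ∂μ

/-- The Kullback–Leibler divergence `D(Leb‖μ)` of Lebesgue measure on `[0,1]` with respect
to `μ`, which is finite exactly when `Leb ≪ μ` and `log (dLeb/dμ)` is integrable. -/
def klLeb (μ : Measure ℝ) : ℝ :=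
  ∫ x, Real.log ((leb01.rnDeriv μ x).toReal) ∂leb01

/-- The set of values `θ² P(σ,μ) − (1/2) D(Leb‖μ)` as `μ` ranges over Borel probability
measures on `[0,1]` with finite Kullback–Leibler divergence `D(Leb‖μ)` (measures with
`D(Leb‖μ) = +∞` contribute `−∞` and are irrelevant for the supremum `F(σ,θ)`). -/
def valSet (σ : ℝ → ℝ → ℝ) (θ : ℝ) : Set ℝ :=
  {r : ℝ | ∃ μ : Measure ℝ, IsProbabilityMeasure μ ∧ μ (Set.Icc (0:ℝ) 1)ᶜ = 0 ∧
    leb01 ≪ μ ∧ Integrable (fun x => Real.log ((leb01.rnDeriv μ x).toReal)) leb01 ∧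
    r = θ ^ 2 * Pfun σ μ - (1 / 2) * klLeb μ}

/-- `F(σ,θ) = sup_{μ ∈ P([0,1])} ( θ² P(σ,μ) − (1/2) D(Leb‖μ) )`. -/
def Fsup (σ : ℝ → ℝ → ℝ) (θ : ℝ) : ℝ := sSup (valSet σ θ)


open Filter Topology BoundedContinuousFunction in
lemma dv_easy (l μ : Measure ℝ) [IsProbabilityMeasure l] [IsProbabilityMeasure μ]
    (hac : l ≪ μ) (hint : Integrable (llr l μ) l) (f : ℝ → ℝ) (hf : Integrable f l)
    (hfe : Integrable (fun x => Real.exp (f x)) μ) :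
    ∫ x, f x ∂l - ∫ x, Real.exp (f x) ∂μ + 1 ≤ ∫ x, llr l μ x ∂l := by
  have h1 := integral_llr_tilted_right hac hf hfe hint
  have := isProbabilityMeasure_tilted hfe
  have h2 := InformationTheory.integral_llr_add_sub_measure_univ_nonneg
    (hac.trans (absolutelyContinuous_tilted hfe)) (integrable_llr_tilted_right hac hf hint hfe)
  simp only [probReal_univ] at h2
  have h3 : 0 < ∫ x, Real.exp (f x) ∂μ := integral_exp_pos hfe
  have h4 := Real.log_le_sub_one_of_pos h3
  linarith

lemma exp_lip (M a b : ℝ) (ha : a ≤ M) :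
    Real.exp a - Real.exp b ≤ Real.exp M * |b - a| := by
  have h1 : Real.exp b = Real.exp a * Real.exp (b - a) := by rw [← Real.exp_add]; ring_nf
  have h2 := Real.add_one_le_exp (b - a)
  have h3 := neg_abs_le (b - a)
  have h4 := Real.exp_le_exp.2 ha
  have h5 := Real.exp_pos a
  have h6 := abs_nonneg (b - a)
  calc Real.exp a - Real.exp b ≤ Real.exp a * |b - a| := by rw [h1]; nlinarith
    _ ≤ _ := by gcongr

lemma clip_dist (M a b : ℝ) (ha : |a| ≤ M) :
    |a - max (-M) (min b M)| ≤ |a - b| := by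
  have := abs_le.1 ha
  have h1 : a = max (-M) (min a M) := by
    rw [min_eq_left this.2, max_eq_right this.1]
  calc |a - max (-M) (min b M)| = |max (-M) (min a M) - max (-M) (min b M)| := by rw [← h1]
    _ ≤ |min a M - min b M| := by
      simpa using abs_max_sub_max_le_max (-M) (min a M) (-M) (min b M)
    _ ≤ |a - b| := by simpa using abs_min_sub_min_le_max a M b M

open BoundedContinuousFunction in
lemma dv_ext (l μ : Measure ℝ) [IsProbabilityMeasure l] [IsProbabilityMeasure μ] (d : ℝ)
    (H : ∀ f : ℝ →ᵇ ℝ, ∫ x, f x ∂l - ∫ x, Real.exp (f x) ∂μ + 1 ≤ d)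
    (f : ℝ → ℝ) (hf : Measurable f) (M : ℝ) (hM : ∀ x, |f x| ≤ M) :
    ∫ x, f x ∂l - ∫ x, Real.exp (f x) ∂μ + 1 ≤ d := by
  have hM0 : 0 ≤ M := (abs_nonneg _).trans (hM 0)
  have bint : ∀ (ν : Measure ℝ) [IsFiniteMeasure ν] (g : ℝ → ℝ), Measurable g →
      (∀ x, |g x| ≤ M) → Integrable g ν := fun ν _ g hg h =>
    Integrable.of_bound hg.aestronglyMeasurable M (Filter.Eventually.of_forall h)
  have eint : ∀ (ν : Measure ℝ) [IsFiniteMeasure ν] (g : ℝ → ℝ), Measurable g →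
      (∀ x, |g x| ≤ M) → Integrable (fun x => Real.exp (g x)) ν := fun ν _ g hg h =>
    Integrable.of_bound (by fun_prop) (Real.exp M) (Filter.Eventually.of_forall fun x => by
      rw [Real.norm_eq_abs, Real.abs_exp]; exact Real.exp_le_exp.2 (abs_le.1 (h x)).2)
  refine le_of_forall_pos_le_add fun ε hε => ?_
  have hC : 0 < 1 + Real.exp M := by positivity
  obtain ⟨g, hg, -⟩ := (bint (l + μ) f hf hM).exists_boundedContinuous_integral_sub_le
    (div_pos hε hC)
  let g' : ℝ →ᵇ ℝ := BoundedContinuousFunction.ofNormedAddCommGroup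
    (fun x => max (-M) (min (g x) M)) (by fun_prop) M (fun x => by
      rw [Real.norm_eq_abs, abs_le]
      exact ⟨le_max_left _ _, max_le (by linarith) (min_le_right _ _)⟩)
  have hg'M : ∀ x, |g' x| ≤ M := fun x => by
    change |max (-M) (min (g x) M)| ≤ M
    rw [abs_le]
    exact ⟨le_max_left _ _, max_le (by linarith) (min_le_right _ _)⟩
  have hg'm : Measurable g' := g'.continuous.measurable
  have hd : ∀ x, |f x - g' x| ≤ |f x - g x| := fun x => clip_dist M _ _ (hM x)
  have hi : ∀ (ν : Measure ℝ) [IsFiniteMeasure ν], Integrable (fun x => |f x - g x|) ν :=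
    fun ν _ => ((bint ν f hf hM).sub (g.integrable ν)).abs
  have hi' : ∀ (ν : Measure ℝ) [IsFiniteMeasure ν], Integrable (fun x => |f x - g' x|) ν :=
    fun ν _ => ((bint ν f hf hM).sub (g'.integrable ν)).abs
  simp only [Real.norm_eq_abs] at hg
  rw [integral_add_measure (hi l) (hi μ)] at hg
  have n1 : 0 ≤ ∫ x, |f x - g x| ∂l := integral_nonneg fun x => abs_nonneg _
  have n2 : 0 ≤ ∫ x, |f x - g x| ∂μ := integral_nonneg fun x => abs_nonneg _
  have h1 : ∫ x, f x ∂l - ∫ x, g' x ∂l ≤ ∫ x, |f x - g x| ∂l := by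
    rw [← integral_sub (bint l f hf hM) (g'.integrable l)]
    exact integral_mono ((bint l f hf hM).sub (g'.integrable l)) (hi l)
      fun x => (le_abs_self _).trans (hd x)
  have h2 : ∫ x, Real.exp (g' x) ∂μ - ∫ x, Real.exp (f x) ∂μ
      ≤ Real.exp M * ∫ x, |f x - g x| ∂μ := by
    rw [← integral_sub (eint μ g' hg'm hg'M) (eint μ f hf hM), ← integral_const_mul]
    refine integral_mono ((eint μ g' hg'm hg'M).sub (eint μ f hf hM)) ((hi μ).const_mul _)
      fun x => ?_
    exact (exp_lip M _ _ (abs_le.1 (hg'M x)).2).trans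
      (mul_le_mul_of_nonneg_left (hd x) (Real.exp_pos _).le)
  have h3 := H g'
  have h4 : ε / (1 + Real.exp M) * (1 + Real.exp M) = ε := div_mul_cancel₀ _ hC.ne'
  have h5 := Real.exp_pos M
  nlinarith

open Filter Topology in
lemma dv_hard (l μ : Measure ℝ) [IsProbabilityMeasure l] [IsProbabilityMeasure μ] (d : ℝ)
    (H : ∀ f : ℝ → ℝ, Measurable f → ∀ M : ℝ, (∀ x, |f x| ≤ M) →
      ∫ x, f x ∂l - ∫ x, Real.exp (f x) ∂μ + 1 ≤ d) :
    l ≪ μ ∧ Integrable (llr l μ) l ∧ ∫ x, llr l μ x ∂l ≤ d := by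
  have hac : l ≪ μ := by
    refine Measure.AbsolutelyContinuous.mk fun A hA hμA => ?_
    by_contra hne
    have hpos : 0 < l.real A := by
      rw [measureReal_def]; exact ENNReal.toReal_pos hne (measure_ne_top _ _)
    have key : ∀ c : ℝ, 0 ≤ c → c * l.real A ≤ d := by
      intro c hc
      have := H (A.indicator fun _ => c) (measurable_const.indicator hA) c (fun x => by
        by_cases hx : x ∈ A <;> simp [hx, abs_of_nonneg, hc])
      rw [integral_indicator_const _ hA] at this
      have h1 : ∫ x, Real.exp (A.indicator (fun _ => c) x) ∂μ = 1 := by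
        have : (fun x => Real.exp (A.indicator (fun _ => c) x)) =ᵐ[μ] fun _ => 1 := by
          have : ∀ᵐ x ∂μ, x ∉ A := measure_eq_zero_iff_ae_notMem.1 hμA
          filter_upwards [this] with x hx
          simp [hx]
        rw [integral_congr_ae this]; simp
      rw [h1, smul_eq_mul] at this
      linarith
    have := key ((|d| + 1) / l.real A) (by positivity)
    rw [div_mul_cancel₀ _ hpos.ne'] at this
    linarith [le_abs_self d]
  refine ⟨hac, ?_⟩
  set ρ : ℝ → ℝ := fun x => (l.rnDeriv μ x).toReal with hρ
  have hρm : Measurable ρ := (Measure.measurable_rnDeriv l μ).ennreal_toReal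
  have hρ0 : ∀ x, 0 ≤ ρ x := fun x => ENNReal.toReal_nonneg
  have hρint : Integrable ρ μ := Measure.integrable_toReal_rnDeriv
  have hρone : ∫ x, ρ x ∂μ = 1 := by
    rw [Measure.integral_toReal_rnDeriv hac]; simp
  have hρpos : ∀ᵐ x ∂l, 0 < ρ x := by
    filter_upwards [Measure.rnDeriv_pos hac, hac.ae_le (Measure.rnDeriv_lt_top l μ)] with x h1 h2
    exact ENNReal.toReal_pos h1.ne' h2.ne
  have hL : llr l μ = fun x => Real.log (ρ x) := rfl
  -- truncations
  let t : ℕ → ℝ → ℝ := fun n r => max (Real.exp (-n)) (min r (Real.exp n))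
  have tpos : ∀ n r, 0 < t n r := fun n r => lt_of_lt_of_le (Real.exp_pos _) (le_max_left _ _)
  have hen : ∀ n : ℕ, Real.exp (-n) ≤ Real.exp n := fun n =>
    Real.exp_le_exp.2 (by have : (0:ℝ) ≤ n := n.cast_nonneg; linarith)
  let h : ℕ → ℝ → ℝ := fun n x => Real.log (t n (ρ x))
  have hm : ∀ n, Measurable (h n) := fun n => by
    simp only [h, t]; fun_prop
  have hb : ∀ n x, |h n x| ≤ n := fun n x => by
    rw [abs_le]
    constructor
    · rw [← Real.log_exp (-(n:ℝ))]
      exact Real.log_le_log (Real.exp_pos _) (le_max_left _ _)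
    · rw [← Real.log_exp (n:ℝ)]
      exact Real.log_le_log (tpos _ _) (max_le (hen n) (by simp))
  have hle : ∀ n, ∫ x, h n x ∂l ≤ d + Real.exp (-n) := by
    intro n
    have h1 := H (h n) (hm n) n (hb n)
    have h2 : ∫ x, Real.exp (h n x) ∂μ ≤ Real.exp (-n) + 1 := by
      calc ∫ x, Real.exp (h n x) ∂μ ≤ ∫ x, (Real.exp (-n) + ρ x) ∂μ := by
            refine integral_mono ?_ ((integrable_const _).add hρint) fun x => ?_
            · refine Integrable.of_bound (by have := hm n; fun_prop) (Real.exp n)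
                (Eventually.of_forall fun x => ?_)
              rw [Real.norm_eq_abs, Real.abs_exp]
              exact Real.exp_le_exp.2 (abs_le.1 (hb n x)).2
            · simp only [h]
              rw [Real.exp_log (tpos _ _)]
              refine max_le (by linarith [hρ0 x]) ((min_le_left _ _).trans ?_)
              linarith [Real.exp_pos (-(n:ℝ))]
        _ = _ := by rw [integral_add (integrable_const _) hρint, hρone]; simp
    linarith
  have habs : ∀ n, ∀ r : ℝ, 0 < r → |Real.log (t n r)| ≤ |Real.log r| ∧
      Real.log (t n r) ≥ min (Real.log r) 0 := by
    intro n r hr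
    have en : Real.exp (-n) ≤ 1 := Real.exp_le_one_iff.2 (by simp)
    have en' : 1 ≤ Real.exp (n:ℝ) := Real.one_le_exp (by simp)
    rcases le_total r 1 with h1 | h1
    · have hlr : Real.log r ≤ 0 := Real.log_nonpos hr.le h1
      have a : t n r ≤ 1 := max_le en ((min_le_left _ _).trans h1)
      have b : r ≤ t n r := (le_min le_rfl (h1.trans en')).trans (le_max_right _ _)
      have c := Real.log_le_log hr b
      have e := Real.log_nonpos (tpos n r).le a
      refine ⟨?_, (min_le_left _ _).trans c⟩
      rw [abs_of_nonpos hlr, abs_of_nonpos e]; linarith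
    · have hlr : 0 ≤ Real.log r := Real.log_nonneg h1
      have a : 1 ≤ t n r := (le_min h1 en').trans (le_max_right _ _)
      have b : t n r ≤ r := max_le (en.trans h1) (min_le_left _ _)
      have c := Real.log_le_log (tpos n r) b
      have e := Real.log_nonneg a
      refine ⟨?_, (min_le_right _ _).trans e⟩
      rw [abs_of_nonneg hlr, abs_of_nonneg e]; exact c
  have hlim : ∀ᵐ x ∂l, Tendsto (fun n => h n x) atTop (𝓝 (llr l μ x)) := by
    filter_upwards [hρpos] with x hx
    refine tendsto_const_nhds.congr' ?_
    obtain ⟨N, hN⟩ := exists_nat_ge |Real.log (ρ x)|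
    filter_upwards [eventually_ge_atTop N] with n hn
    have hn' : |Real.log (ρ x)| ≤ n := hN.trans (by exact_mod_cast hn)
    have := abs_le.1 hn'
    have a : Real.exp (-n) ≤ ρ x := by rw [← Real.le_log_iff_exp_le hx]; exact this.1
    have b : ρ x ≤ Real.exp n := by rw [← Real.log_le_iff_le_exp hx]; exact this.2
    simp only [h, t, hL]
    rw [min_eq_left b, max_eq_right a]
  -- negative part
  have hneg : Integrable (fun x => min (Real.log (ρ x)) 0) l := by
    rw [← integrable_rnDeriv_smul_iff hac]
    refine Integrable.of_bound (C := 1) ?_ (Eventually.of_forall fun x => ?_)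
    · exact (by fun_prop : Measurable (fun x => ρ x • min (Real.log (ρ x)) 0)).aestronglyMeasurable
    · change ‖ρ x * min (Real.log (ρ x)) 0‖ ≤ 1
      rw [Real.norm_eq_abs, abs_of_nonpos (mul_nonpos_of_nonneg_of_nonpos (hρ0 x) (min_le_right _ _))]
      rcases le_or_gt (ρ x) 1 with h1 | h1
      · rw [min_eq_left (Real.log_nonpos (hρ0 x) h1)]
        rcases (hρ0 x).eq_or_lt with h0 | h0
        · rw [← h0]; simp
        · have := Real.one_sub_inv_le_log_of_pos h0
          have h2 : ρ x * (1 - (ρ x)⁻¹) ≤ ρ x * Real.log (ρ x) :=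
            mul_le_mul_of_nonneg_left this h0.le
          rw [mul_sub, mul_inv_cancel₀ h0.ne'] at h2
          linarith
      · rw [min_eq_right (Real.log_nonneg h1.le)]; simp
  have hint : ∀ n, Integrable (h n) l := fun n =>
    Integrable.of_bound (hm n).aestronglyMeasurable n (Eventually.of_forall (hb n))
  set N := ∫ x, min (Real.log (ρ x)) 0 ∂l with hN
  have habsint : ∀ n, ∫ x, |h n x| ∂l ≤ d + 1 - 2 * N := by
    intro n
    calc ∫ x, |h n x| ∂l ≤ ∫ x, (h n x - 2 * min (Real.log (ρ x)) 0) ∂l := by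
          refine integral_mono_ae (hint n).abs ((hint n).sub (hneg.const_mul 2)) ?_
          filter_upwards [hρpos] with x hx
          have := (habs n (ρ x) hx).2
          change min (Real.log (ρ x)) 0 ≤ h n x at this
          have h0 := min_le_right (Real.log (ρ x)) 0
          rw [abs_le']
          constructor <;> linarith
      _ = ∫ x, h n x ∂l - 2 * N := by
          rw [integral_sub (hint n) (hneg.const_mul 2), integral_const_mul]
      _ ≤ _ := by
          have := hle n
          have en : Real.exp (-n) ≤ 1 := Real.exp_le_one_iff.2 (by simp)
          linarith
  have hLint : Integrable (llr l μ) l := by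
    refine integrable_of_tendsto hlim (fun n => (hm n).aestronglyMeasurable) ?_
    refine ne_top_of_le_ne_top (b := ENNReal.ofReal (d + 1 - 2 * N)) ENNReal.ofReal_ne_top ?_
    refine liminf_le_of_le (by isBoundedDefault) ?_
    intro b hbb
    obtain ⟨n, hn⟩ := hbb.exists
    refine hn.trans ?_
    rw [← ofReal_integral_norm_eq_lintegral_enorm (hint n)]
    exact ENNReal.ofReal_le_ofReal (habsint n)
  refine ⟨hLint, ?_⟩
  have hT : Tendsto (fun n => ∫ x, h n x ∂l) atTop (𝓝 (∫ x, llr l μ x ∂l)) := by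
    refine tendsto_integral_of_dominated_convergence (fun x => |llr l μ x|)
      (fun n => (hm n).aestronglyMeasurable) hLint.abs (fun n => ?_) hlim
    filter_upwards [hρpos] with x hx
    exact (habs n (ρ x) hx).1
  have hT2 : Tendsto (fun n : ℕ => d + Real.exp (-n)) atTop (𝓝 (d + 0)) :=
    tendsto_const_nhds.add
      (Real.tendsto_exp_neg_atTop_nhds_zero.comp tendsto_natCast_atTop_atTop)
  rw [add_zero] at hT2
  exact le_of_tendsto_of_tendsto' hT hT2 hle

instance leb01_prob : IsProbabilityMeasure leb01 := ⟨by simp [leb01]⟩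

/-- `σ²` extended continuously from the unit square to the plane. -/
def tauFun (σ : ℝ → ℝ → ℝ) (p : ℝ × ℝ) : ℝ :=
  σ (Set.projIcc (0:ℝ) 1 zero_le_one p.1) (Set.projIcc (0:ℝ) 1 zero_le_one p.2) ^ 2

lemma tauFun_continuous (σ : ℝ → ℝ → ℝ)
    (hσcont : ContinuousOn (Function.uncurry σ) (Set.Icc (0:ℝ) 1 ×ˢ Set.Icc (0:ℝ) 1)) :
    Continuous (tauFun σ) := by
  have h : Continuous (fun p : ℝ × ℝ => Function.uncurry σ
      ((Set.projIcc (0:ℝ) 1 zero_le_one p.1 : ℝ), (Set.projIcc (0:ℝ) 1 zero_le_one p.2 : ℝ))) := by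
    refine hσcont.comp_continuous ?_ fun p => ⟨Subtype.coe_prop _, Subtype.coe_prop _⟩
    have := @continuous_projIcc ℝ _ 0 1 zero_le_one _ _
    fun_prop
  exact h.pow 2

lemma Pfun_eq (σ : ℝ → ℝ → ℝ) (μ : Measure ℝ) [IsProbabilityMeasure μ]
    (hμ : μ (Set.Icc (0:ℝ) 1)ᶜ = 0) (hint : Integrable (tauFun σ) (μ.prod μ)) :
    Pfun σ μ = ∫ p, tauFun σ p ∂(μ.prod μ) := by
  have hae : ∀ᵐ x ∂μ, x ∈ Set.Icc (0:ℝ) 1 := by rw [ae_iff]; exact hμ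
  rw [integral_prod _ hint, Pfun]
  refine integral_congr_ae ?_
  filter_upwards [hae] with x hx
  refine integral_congr_ae ?_
  filter_upwards [hae] with y hy
  simp only [tauFun]
  rw [Set.projIcc_of_mem _ hx, Set.projIcc_of_mem _ hy]

open BoundedContinuousFunction Filter Topology

/-- For a bounded continuous symmetric `σ : [0,1]² → [0,∞)`:
(i) for every `θ > 0` the supremum defining `F(σ,θ)` is attained by some probability
measure on `[0,1]`; (ii) `|F(σ,θ) − F(σ,θ')| ≤ (sup σ²)·|θ² − θ'²|`, so `F(σ,·)` is
continuous in `θ`. -/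
theorem F_attained_and_continuous
    (σ : ℝ → ℝ → ℝ)
    (hσcont : ContinuousOn (Function.uncurry σ) (Set.Icc (0:ℝ) 1 ×ˢ Set.Icc (0:ℝ) 1))
    (hσnn : ∀ x ∈ Set.Icc (0:ℝ) 1, ∀ y ∈ Set.Icc (0:ℝ) 1, 0 ≤ σ x y)
    (hσsymm : ∀ x ∈ Set.Icc (0:ℝ) 1, ∀ y ∈ Set.Icc (0:ℝ) 1, σ x y = σ y x)
    (B : ℝ) (hσbdd : ∀ x ∈ Set.Icc (0:ℝ) 1, ∀ y ∈ Set.Icc (0:ℝ) 1, σ x y ≤ B) :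
    (∀ θ : ℝ, 0 < θ → ∃ r : ℝ, IsGreatest (valSet σ θ) r) ∧
    (∀ θ θ' : ℝ, 0 < θ → 0 < θ' →
      |Fsup σ θ - Fsup σ θ'| ≤
        sSup {v : ℝ | ∃ x ∈ Set.Icc (0:ℝ) 1, ∃ y ∈ Set.Icc (0:ℝ) 1, v = σ x y ^ 2} *
          |θ ^ 2 - θ' ^ 2|) ∧
    ContinuousOn (Fsup σ) (Set.Ioi (0:ℝ)) := by
  classical
  set S := {v : ℝ | ∃ x ∈ Set.Icc (0:ℝ) 1, ∃ y ∈ Set.Icc (0:ℝ) 1, v = σ x y ^ 2} with hS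
  have hSb : BddAbove S := by
    refine ⟨B ^ 2, ?_⟩
    rintro v ⟨x, hx, y, hy, rfl⟩
    exact pow_le_pow_left₀ (hσnn x hx y hy) (hσbdd x hx y hy) 2
  have hτ0 : ∀ p, 0 ≤ tauFun σ p := fun p => sq_nonneg _
  have hτS : ∀ p, tauFun σ p ≤ sSup S := fun p =>
    le_csSup hSb ⟨_, Subtype.coe_prop _, _, Subtype.coe_prop _, rfl⟩
  let τ : ℝ × ℝ →ᵇ ℝ := BoundedContinuousFunction.ofNormedAddCommGroup (tauFun σ)
    (tauFun_continuous σ hσcont) (sSup S) (fun p => by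
      rw [Real.norm_eq_abs, abs_of_nonneg (hτ0 p)]; exact hτS p)
  have hτi : ∀ μ : Measure ℝ, IsProbabilityMeasure μ → Integrable (tauFun σ) (μ.prod μ) :=
    fun μ _ => τ.integrable (μ.prod μ)
  have hPeq : ∀ μ : Measure ℝ, IsProbabilityMeasure μ → μ (Set.Icc (0:ℝ) 1)ᶜ = 0 →
      Pfun σ μ = ∫ p, tauFun σ p ∂(μ.prod μ) := fun μ h1 h2 => Pfun_eq σ μ h2 (hτi μ h1)
  have hP0 : ∀ μ : Measure ℝ, IsProbabilityMeasure μ → μ (Set.Icc (0:ℝ) 1)ᶜ = 0 →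
      0 ≤ Pfun σ μ := fun μ h1 h2 => by
    rw [hPeq μ h1 h2]; exact integral_nonneg hτ0
  have hPS : ∀ μ : Measure ℝ, IsProbabilityMeasure μ → μ (Set.Icc (0:ℝ) 1)ᶜ = 0 →
      Pfun σ μ ≤ sSup S := fun μ h1 h2 => by
    rw [hPeq μ h1 h2]
    calc ∫ p, tauFun σ p ∂(μ.prod μ) ≤ ∫ p, sSup S ∂(μ.prod μ) :=
          integral_mono (hτi μ h1) (integrable_const _) hτS
      _ = sSup S := by simp
  have eint : ∀ (ν : Measure ℝ) [IsFiniteMeasure ν] (f : ℝ →ᵇ ℝ),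
      Integrable (fun x => Real.exp (f x)) ν := fun ν _ f =>
    Integrable.of_bound (Real.continuous_exp.comp f.continuous).aestronglyMeasurable
      (Real.exp ‖f‖) (Eventually.of_forall fun x => by
        rw [Real.norm_eq_abs, Real.abs_exp]
        exact Real.exp_le_exp.2 ((le_abs_self _).trans (f.norm_coe_le_norm x)))
  have hkl : ∀ μ : Measure ℝ, IsProbabilityMeasure μ → leb01 ≪ μ →
      Integrable (fun x => Real.log ((leb01.rnDeriv μ x).toReal)) leb01 →
      ∀ f : ℝ →ᵇ ℝ, ∫ x, f x ∂leb01 - ∫ x, Real.exp (f x) ∂μ + 1 ≤ klLeb μ :=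
    fun μ _ hac hi f => dv_easy leb01 μ hac hi f (f.integrable _) (eint μ f)
  have hkl0 : ∀ μ : Measure ℝ, IsProbabilityMeasure μ → leb01 ≪ μ →
      Integrable (fun x => Real.log ((leb01.rnDeriv μ x).toReal)) leb01 → 0 ≤ klLeb μ := by
    intro μ h1 hac hi
    simpa using hkl μ h1 hac hi 0
  have hbdd : ∀ θ : ℝ, BddAbove (valSet σ θ) := by
    intro θ
    refine ⟨θ ^ 2 * sSup S, ?_⟩
    rintro r ⟨μ, h1, h2, h3, h4, rfl⟩
    have a := hkl0 μ h1 h3 h4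
    have b := mul_le_mul_of_nonneg_left (hPS μ h1 h2) (sq_nonneg θ)
    linarith
  have hne : ∀ θ : ℝ, (valSet σ θ).Nonempty := by
    intro θ
    refine ⟨_, leb01, leb01_prob, ?_, Measure.AbsolutelyContinuous.rfl, ?_, rfl⟩
    · simp [leb01, measurableSet_Icc.compl]
    · exact (integrable_zero _ _ _).congr (llr_self leb01).symm
  have hK : IsCompact {μ : ProbabilityMeasure ℝ | ∀ _ : ℕ, μ (Set.Icc (0:ℝ) 1)ᶜ ≤ 0} :=
    isCompact_setOfPred_probabilityMeasure_mass_eq_compl_isCompact_le (u := fun _ => 0)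
      (K := fun _ => Set.Icc (0:ℝ) 1) tendsto_const_nhds (fun _ => isCompact_Icc)
      (Or.inl inferInstance)
  have hmax : ∀ θ : ℝ, IsGreatest (valSet σ θ) (Fsup σ θ) := by
    intro θ
    have hlub : IsLUB (valSet σ θ) (Fsup σ θ) := isLUB_csSup (hne θ) (hbdd θ)
    obtain ⟨u, -, -, hu, huv⟩ := hlub.exists_seq_monotone_tendsto (hne θ)
    choose m m1 m2 m3 m4 m5 using huv
    let ms : ℕ → ProbabilityMeasure ℝ := fun n => ⟨m n, m1 n⟩
    have hsupp : ∀ ν : ProbabilityMeasure ℝ, ν (Set.Icc (0:ℝ) 1)ᶜ ≤ 0 ↔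
        (ν : Measure ℝ) (Set.Icc (0:ℝ) 1)ᶜ = 0 := by
      intro ν
      rw [nonpos_iff_eq_zero, ProbabilityMeasure.null_iff_toMeasure_null]
    let U : Ultrafilter ℕ := hyperfilter ℕ
    have hU : (U : Filter ℕ) ≤ atTop := Nat.hyperfilter_le_atTop
    obtain ⟨μ, hμ, hlim⟩ := hK.ultrafilter_le_nhds' (U.map ms)
      (Ultrafilter.mem_map.2 (Filter.univ_mem' fun n _ => (hsupp (ms n)).2 (m2 n)))
    have hlim : Tendsto ms U (𝓝 μ) := hlim
    have hμs : (μ : Measure ℝ) (Set.Icc (0:ℝ) 1)ᶜ = 0 := (hsupp μ).1 (hμ 0)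
    have hlimP : Tendsto (fun n => Pfun σ (m n)) U (𝓝 (Pfun σ μ)) := by
      have h1 : Tendsto (fun n => (ms n).prod (ms n)) U (𝓝 (μ.prod μ)) :=
        (ProbabilityMeasure.continuous_prod.tendsto (μ, μ)).comp (hlim.prodMk_nhds hlim)
      have h2 := ProbabilityMeasure.tendsto_iff_forall_integral_tendsto.1 h1 τ
      rw [hPeq μ inferInstance hμs]
      refine h2.congr fun n => ?_
      exact (hPeq (m n) (m1 n) (m2 n)).symm
    have hd := dv_hard leb01 (μ : Measure ℝ) (2 * (θ ^ 2 * Pfun σ μ - Fsup σ θ))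
      (dv_ext leb01 (μ : Measure ℝ) _ fun f => by
        let ef : ℝ →ᵇ ℝ := BoundedContinuousFunction.ofNormedAddCommGroup
          (fun x => Real.exp (f x)) (Real.continuous_exp.comp f.continuous) (Real.exp ‖f‖)
          (fun x => by
            rw [Real.norm_eq_abs, Real.abs_exp]
            exact Real.exp_le_exp.2 ((le_abs_self _).trans (f.norm_coe_le_norm x)))
        have h1 : Tendsto (fun n => ∫ x, Real.exp (f x) ∂(m n)) U
            (𝓝 (∫ x, Real.exp (f x) ∂(μ : Measure ℝ))) :=
          ProbabilityMeasure.tendsto_iff_forall_integral_tendsto.1 hlim ef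
        refine le_of_tendsto_of_tendsto' ((tendsto_const_nhds.sub h1).add_const 1)
          (((hlimP.const_mul (θ ^ 2)).sub (hu.mono_left hU)).const_mul 2) fun n => ?_
        have h2 := hkl (m n) (m1 n) (m3 n) (m4 n) f
        rw [m5 n]
        linarith)
    have hmem : θ ^ 2 * Pfun σ μ - (1 / 2) * klLeb μ ∈ valSet σ θ :=
      ⟨μ, inferInstance, hμs, hd.1, hd.2.1, rfl⟩
    have hge : Fsup σ θ ≤ θ ^ 2 * Pfun σ μ - (1 / 2) * klLeb μ := by
      have : klLeb μ ≤ 2 * (θ ^ 2 * Pfun σ μ - Fsup σ θ) := hd.2.2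
      linarith
    have heq := le_antisymm hge (hlub.1 hmem)
    exact ⟨heq ▸ hmem, hlub.1⟩
  have hone : ∀ θ θ' : ℝ, Fsup σ θ - Fsup σ θ' ≤ sSup S * |θ ^ 2 - θ' ^ 2| := by
    intro θ θ'
    obtain ⟨μ, h1, h2, h3, h4, h5⟩ := (hmax θ).1
    have h6 := (hmax θ').2 ⟨μ, h1, h2, h3, h4, rfl⟩
    have h7 : (θ ^ 2 - θ' ^ 2) * Pfun σ μ ≤ sSup S * |θ ^ 2 - θ' ^ 2| := by
      rw [mul_comm (sSup S)]
      exact mul_le_mul (le_abs_self _) (hPS μ h1 h2) (hP0 μ h1 h2) (abs_nonneg _)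
    rw [h5]
    linarith
  have hlip : ∀ θ θ' : ℝ, |Fsup σ θ - Fsup σ θ'| ≤ sSup S * |θ ^ 2 - θ' ^ 2| := by
    intro θ θ'
    rw [abs_le']
    refine ⟨hone θ θ', ?_⟩
    rw [neg_sub, abs_sub_comm]
    exact hone θ' θ
  refine ⟨fun θ _ => ⟨_, hmax θ⟩, fun θ θ' _ _ => hlip θ θ', ?_⟩
  refine Continuous.continuousOn (continuous_iff_continuousAt.2 fun θ => ?_)
  rw [ContinuousAt, tendsto_iff_dist_tendsto_zero]
  have : Continuous (fun x : ℝ => sSup S * |x ^ 2 - θ ^ 2|) := by fun_prop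
  have h0 : Tendsto (fun x : ℝ => sSup S * |x ^ 2 - θ ^ 2|) (𝓝 θ) (𝓝 0) := by
    simpa using this.tendsto θ
  exact squeeze_zero (fun _ => dist_nonneg) (fun x => hlip x θ) h0


end
end

section
/- Let n ≥ 1, let S be a symmetric n×n real matrix with nonnegative entries such that ⟨ψ, Sψ⟩ ≤ 0 for every ψ ∈ ℝ^n with ψ_1+⋯+ψ_n = 0, and let α ∈ (0,1)^n with Σα_i = 1. Then for every θ ≥ 0 the function ψ ↦ θ²⟨ψ, Sψ⟩ + (1/2)Σ_{i=1}^n α_i log ψ_i admits a unique maximizer ψ^θ over the open simplex {ψ ∈ ℝ^n : ψ_i > 0, Σψ_i = 1}, and the map θ ↦ ψ^θ is continuous on [0,∞). In particular there is a continuous selection of maximal arguments of the optimization problem defining F(σ,θ). -/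
open Finset

namespace UCM

variable {n : ℕ}

/-- The quadratic form of `S`. -/
noncomputable def Q (S : Matrix (Fin n) (Fin n) ℝ) (φ : Fin n → ℝ) : ℝ :=
  ∑ i, ∑ j, φ i * S i j * φ j

/-- The functional to maximize. -/
noncomputable def F (S : Matrix (Fin n) (Fin n) ℝ) (α : Fin n → ℝ) (θ : ℝ) (φ : Fin n → ℝ) : ℝ :=
  θ ^ 2 * Q S φ + (1 / 2) * ∑ i, α i * Real.log (φ i)

/-- The open simplex. -/
def Simp (φ : Fin n → ℝ) : Prop := (∀ i, 0 < φ i) ∧ ∑ i, φ i = 1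

lemma Simp.le_one {φ : Fin n → ℝ} (h : Simp φ) (i : Fin n) : φ i ≤ 1 := by
  rw [← h.2]
  exact Finset.single_le_sum (f := φ) (fun j _ => (h.1 j).le) (mem_univ i)

lemma Q_nonneg {S : Matrix (Fin n) (Fin n) ℝ} (hS : ∀ i j, 0 ≤ S i j) {φ : Fin n → ℝ}
    (h : Simp φ) : 0 ≤ Q S φ :=
  Finset.sum_nonneg fun i _ => Finset.sum_nonneg fun j _ =>
    mul_nonneg (mul_nonneg (h.1 i).le (hS i j)) (h.1 j).le

lemma Q_le {S : Matrix (Fin n) (Fin n) ℝ} (hS : ∀ i j, 0 ≤ S i j) {φ : Fin n → ℝ}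
    (h : Simp φ) : Q S φ ≤ ∑ i, ∑ j, S i j := by
  refine Finset.sum_le_sum fun i _ => Finset.sum_le_sum fun j _ => ?_
  have h1 : φ i * S i j ≤ S i j := mul_le_of_le_one_left (hS i j) (h.le_one i)
  have h2 : φ i * S i j * φ j ≤ φ i * S i j :=
    mul_le_of_le_one_right (mul_nonneg (h.1 i).le (hS i j)) (h.le_one j)
  exact h2.trans h1

lemma Q_mid (S : Matrix (Fin n) (Fin n) ℝ) (φ χ : Fin n → ℝ) :
    Q S (fun i => (φ i + χ i) / 2) = (Q S φ + Q S χ) / 2 - Q S (fun i => φ i - χ i) / 4 := by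
  unfold Q
  simp only [Finset.sum_div, ← Finset.sum_add_distrib, ← Finset.sum_sub_distrib]
  refine Finset.sum_congr rfl fun i _ => Finset.sum_congr rfl fun j _ => ?_
  ring

lemma log_mid {a b : ℝ} (ha : 0 < a) (hb : 0 < b) (h : a ≠ b) :
    (Real.log a + Real.log b) / 2 < Real.log ((a + b) / 2) := by
  have := strictConcaveOn_log_Ioi.2 (Set.mem_Ioi.2 ha) (Set.mem_Ioi.2 hb) h
    (show (0:ℝ) < 1 / 2 by norm_num) (show (0:ℝ) < 1 / 2 by norm_num) (by norm_num)
  simp only [smul_eq_mul] at this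
  have e : (a + b) / 2 = 1 / 2 * a + 1 / 2 * b := by ring
  rw [e]; linarith

lemma log_mid_le {a b : ℝ} (ha : 0 < a) (hb : 0 < b) :
    (Real.log a + Real.log b) / 2 ≤ Real.log ((a + b) / 2) := by
  by_cases h : a = b
  · subst h; simp
  · exact (log_mid ha hb h).le

lemma F_mid {S : Matrix (Fin n) (Fin n) ℝ}
    (hSneg : ∀ ψ : Fin n → ℝ, ∑ i, ψ i = 0 → Q S ψ ≤ 0)
    {α : Fin n → ℝ} (hα : ∀ i, 0 < α i) (θ : ℝ) {φ χ : Fin n → ℝ} (h1 : Simp φ) (h2 : Simp χ)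
    (hne : φ ≠ χ) :
    (F S α θ φ + F S α θ χ) / 2 < F S α θ (fun i => (φ i + χ i) / 2) := by
  obtain ⟨k, hk⟩ := Function.ne_iff.1 hne
  have hL : ∑ i, (α i * Real.log (φ i) + α i * Real.log (χ i)) / 2
      < ∑ i, α i * Real.log ((φ i + χ i) / 2) := by
    refine Finset.sum_lt_sum (fun i _ => ?_) ⟨k, mem_univ k, ?_⟩
    · have := mul_le_mul_of_nonneg_left (log_mid_le (h1.1 i) (h2.1 i)) (hα i).le
      linarith
    · have := mul_lt_mul_of_pos_left (log_mid (h1.1 k) (h2.1 k) hk) (hα k)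
      linarith
  rw [← Finset.sum_div, Finset.sum_add_distrib] at hL
  have hd : Q S (fun i => φ i - χ i) ≤ 0 := hSneg _ (by
    rw [Finset.sum_sub_distrib, h1.2, h2.2]; simp)
  have := mul_nonneg (sq_nonneg θ) (neg_nonneg.2 hd)
  unfold F
  rw [Q_mid]
  nlinarith

lemma simp_mid {φ χ : Fin n → ℝ} (h1 : Simp φ) (h2 : Simp χ) :
    Simp (fun i => (φ i + χ i) / 2) := by
  refine ⟨fun i => by have := h1.1 i; have := h2.1 i; positivity, ?_⟩
  rw [← Finset.sum_div, Finset.sum_add_distrib, h1.2, h2.2]; norm_num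

/-- Compact core. -/
def K (δ : Fin n → ℝ) : Set (Fin n → ℝ) := {φ | (∀ i, δ i ≤ φ i) ∧ ∑ i, φ i = 1}

lemma K_simp {δ φ : Fin n → ℝ} (hδ : ∀ i, 0 < δ i) (h : φ ∈ K δ) : Simp φ :=
  ⟨fun i => (hδ i).trans_le (h.1 i), h.2⟩

lemma K_compact {δ : Fin n → ℝ} (hδ : ∀ i, 0 < δ i) : IsCompact (K δ) := by
  have hc : IsClosed (K δ) := by
    refine IsClosed.inter (s₁ := {φ : Fin n → ℝ | ∀ i, δ i ≤ φ i})
      (s₂ := {φ : Fin n → ℝ | ∑ i, φ i = 1}) ?_ ?_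
    · simp only [Set.ofPred_forall]
      exact isClosed_iInter fun i => isClosed_le continuous_const (continuous_apply i)
    · exact isClosed_eq (by fun_prop) continuous_const
  refine (isCompact_Icc (a := δ) (b := fun _ => (1:ℝ))).of_isClosed_subset hc ?_
  exact fun φ h => ⟨h.1, (K_simp hδ h).le_one⟩

lemma F_cont (S : Matrix (Fin n) (Fin n) ℝ) (α : Fin n → ℝ) (θ : ℝ) {φ : Fin n → ℝ}
    (h : Simp φ) : ContinuousAt (F S α θ) φ := by
  have hl : ∀ i, ContinuousAt (fun φ : Fin n → ℝ => Real.log (φ i)) φ := fun i =>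
    (continuous_apply i).continuousAt.log (h.1 i).ne'
  unfold F Q
  fun_prop

/-- Coordinates lower bound. -/
noncomputable def lo (S : Matrix (Fin n) (Fin n) ℝ) (α : Fin n → ℝ) (M : ℝ) (i : Fin n) : ℝ :=
  Real.exp (2 * ((1 / 2) * ∑ i, α i * Real.log (α i) - M * ∑ i, ∑ j, S i j) / α i)

lemma mem_K {S : Matrix (Fin n) (Fin n) ℝ} (hS : ∀ i j, 0 ≤ S i j)
    {α : Fin n → ℝ} (hα : Simp α) {θ M : ℝ} (hM : θ ^ 2 ≤ M) {φ : Fin n → ℝ} (h : Simp φ)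
    (hF : F S α θ α ≤ F S α θ φ) : φ ∈ K (lo S α M) := by
  refine ⟨fun i => ?_, h.2⟩
  unfold lo
  rw [← Real.le_log_iff_exp_le (h.1 i), div_le_iff₀ (hα.1 i)]
  have h1 : ∑ i, α i * Real.log (φ i) ≤ α i * Real.log (φ i) := by
    rw [← Finset.add_sum_erase _ _ (mem_univ i)]
    have : ∑ x ∈ univ.erase i, α x * Real.log (φ x) ≤ 0 := Finset.sum_nonpos fun j _ =>
      mul_nonpos_of_nonneg_of_nonpos (hα.1 j).le (Real.log_nonpos (h.1 j).le (h.le_one j))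
    linarith
  have h2 : θ ^ 2 * Q S φ ≤ M * ∑ i, ∑ j, S i j :=
    mul_le_mul hM (Q_le hS h) (Q_nonneg hS h) ((sq_nonneg θ).trans hM)
  have h3 : 0 ≤ θ ^ 2 * Q S α := mul_nonneg (sq_nonneg θ) (Q_nonneg hS hα)
  unfold F at hF
  linarith

lemma exists_max {S : Matrix (Fin n) (Fin n) ℝ} (hS : ∀ i j, 0 ≤ S i j)
    {α : Fin n → ℝ} (hα : Simp α) (θ : ℝ) :
    ∃ ψ, Simp ψ ∧ ∀ φ, Simp φ → F S α θ φ ≤ F S α θ ψ := by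
  have hpos : ∀ i, 0 < lo S α (θ ^ 2) i := fun i => Real.exp_pos _
  have hαK : α ∈ K (lo S α (θ ^ 2)) := mem_K hS hα le_rfl hα le_rfl
  obtain ⟨ψ, hψ, hmax⟩ := (K_compact hpos).exists_isMaxOn ⟨α, hαK⟩
    (f := F S α θ) (fun φ h => (F_cont S α θ (K_simp hpos h)).continuousWithinAt)
  refine ⟨ψ, K_simp hpos hψ, fun φ h => ?_⟩
  by_cases hF : F S α θ α ≤ F S α θ φ
  · exact hmax (mem_K hS hα le_rfl h hF)
  · exact (not_le.1 hF).le.trans (hmax hαK)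

lemma F_diff {S : Matrix (Fin n) (Fin n) ℝ} (hS : ∀ i j, 0 ≤ S i j)
    (α : Fin n → ℝ) (θ η : ℝ) {φ : Fin n → ℝ} (h : Simp φ) :
    F S α θ φ ≤ F S α η φ + |θ ^ 2 - η ^ 2| * ∑ i, ∑ j, S i j := by
  have h1 : (θ ^ 2 - η ^ 2) * Q S φ ≤ |θ ^ 2 - η ^ 2| * ∑ i, ∑ j, S i j :=
    mul_le_mul (le_abs_self _) (Q_le hS h) (Q_nonneg hS h) (abs_nonneg _)
  unfold F
  linarith

end UCM

/-- If `S` is a symmetric nonnegative `n × n` matrix whose quadratic form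
is nonpositive on the hyperplane `{ψ : Σψᵢ = 0}`, and `α ∈ (0,1)ⁿ` sums to `1`, then for
every `θ ≥ 0` the function `ψ ↦ θ²⟨ψ, Sψ⟩ + (1/2) Σ αᵢ log ψᵢ` has a unique maximizer over
the open simplex, and this maximizer depends continuously on `θ` on `[0,∞)`. -/
theorem unique_continuous_maximizer_of_concave_profile
    (n : ℕ) (hn : 1 ≤ n) (S : Matrix (Fin n) (Fin n) ℝ)
    (hSsymm : S.IsSymm) (hSnn : ∀ i j, 0 ≤ S i j)
    (hSneg : ∀ ψ : Fin n → ℝ, ∑ i, ψ i = 0 → ∑ i, ∑ j, ψ i * S i j * ψ j ≤ 0)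
    (α : Fin n → ℝ) (hαpos : ∀ i, 0 < α i) (hαlt : ∀ i, α i < 1)
    (hαsum : ∑ i, α i = 1) :
    ∃ ψ : ℝ → Fin n → ℝ,
      ContinuousOn ψ (Set.Ici (0:ℝ)) ∧
      ∀ θ : ℝ, 0 ≤ θ →
        (∀ i, 0 < ψ θ i) ∧ (∑ i, ψ θ i = 1) ∧
        (∀ φ : Fin n → ℝ, (∀ i, 0 < φ i) → ∑ i, φ i = 1 →
          θ ^ 2 * ∑ i, ∑ j, φ i * S i j * φ j
              + (1 / 2) * ∑ i, α i * Real.log (φ i)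
            ≤ θ ^ 2 * ∑ i, ∑ j, ψ θ i * S i j * ψ θ j
              + (1 / 2) * ∑ i, α i * Real.log (ψ θ i)) ∧
        (∀ φ : Fin n → ℝ, (∀ i, 0 < φ i) → ∑ i, φ i = 1 →
          θ ^ 2 * ∑ i, ∑ j, φ i * S i j * φ j
              + (1 / 2) * ∑ i, α i * Real.log (φ i)
            = θ ^ 2 * ∑ i, ∑ j, ψ θ i * S i j * ψ θ j
              + (1 / 2) * ∑ i, α i * Real.log (ψ θ i) →
          φ = ψ θ) := by
  classical
  have hα : UCM.Simp α := ⟨hαpos, hαsum⟩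
  choose ψ hψ hmax using UCM.exists_max hSnn hα
  have huniq : ∀ θ φ, UCM.Simp φ → UCM.F S α θ φ = UCM.F S α θ (ψ θ) → φ = ψ θ := by
    intro θ φ h he
    by_contra hne
    have h1 := UCM.F_mid hSneg hαpos θ h (hψ θ) hne
    have h2 := hmax θ _ (UCM.simp_mid h (hψ θ))
    linarith
  refine ⟨ψ, ?_, fun θ _ => ⟨(hψ θ).1, (hψ θ).2, fun φ h1 h2 => hmax θ φ ⟨h1, h2⟩,
    fun φ h1 h2 h3 => huniq θ φ ⟨h1, h2⟩ h3⟩⟩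
  refine Continuous.continuousOn (continuous_iff_continuousAt.2 fun θ₀ => ?_)
  have hpos : ∀ i, 0 < UCM.lo S α (θ₀ ^ 2 + 1) i := fun i => Real.exp_pos _
  have hev : ∀ᶠ θ in nhds θ₀, ψ θ ∈ UCM.K (UCM.lo S α (θ₀ ^ 2 + 1)) := by
    have hc : ContinuousAt (fun θ : ℝ => θ ^ 2) θ₀ := by fun_prop
    filter_upwards [hc.eventually_lt_const (lt_add_one (θ₀ ^ 2))] with θ hθ
    exact UCM.mem_K hSnn hα hθ.le (hψ θ) (hmax θ α hα)
  have hlim : Filter.Tendsto (fun θ => UCM.F S α θ₀ (ψ θ)) (nhds θ₀)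
      (nhds (UCM.F S α θ₀ (ψ θ₀))) := by
    have hg : Filter.Tendsto (fun θ : ℝ => UCM.F S α θ₀ (ψ θ₀)
        - 2 * (|θ ^ 2 - θ₀ ^ 2| * ∑ i, ∑ j, S i j)) (nhds θ₀)
        (nhds (UCM.F S α θ₀ (ψ θ₀))) := by
      have hc : Continuous (fun θ : ℝ => UCM.F S α θ₀ (ψ θ₀)
        - 2 * (|θ ^ 2 - θ₀ ^ 2| * ∑ i, ∑ j, S i j)) := by fun_prop
      simpa using hc.tendsto θ₀
    refine tendsto_of_tendsto_of_tendsto_of_le_of_le hg tendsto_const_nhds (fun θ => ?_)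
      (fun θ => hmax θ₀ _ (hψ θ))
    have h1 := UCM.F_diff hSnn α θ θ₀ (hψ θ)
    have h2 := UCM.F_diff hSnn α θ₀ θ (hψ θ₀)
    rw [abs_sub_comm] at h2
    have h3 := hmax θ _ (hψ θ₀)
    simp only
    linarith
  refine (UCM.K_compact hpos).tendsto_nhds_of_unique_mapClusterPt hev fun x hx hcl => ?_
  have hxs := UCM.K_simp hpos hx
  refine huniq θ₀ x hxs ?_
  have h1 := hcl.continuousAt_comp (UCM.F_cont S α θ₀ hxs)
  exact eq_of_nhds_neBot (Filter.NeBot.mono h1 (inf_le_inf_left _ hlim))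
end
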